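/- arXiv:1210.3862 — 2 statements merged into one kernel-verified Lean document; each statement's English description precedes it below -/
import Mathlib

section
/- For all x ≥ 2, ∑_{n ≤ x} (D_K(n) Λ_K*(n))² ≪ x·log x, where the implied constant depends only on K. -/
/-!
Setting: `K` is a number field, Galois over `ℚ`, with ring of integers `𝓞 K`.
We formalize the objects from Smith, "A generalization of the
Barban-Davenport-Halberstam Theorem to number fields".
-/

open NumberField Ideal
open scoped Classical BigOperators

noncomputable section

/-- `𝔞` is a (positive) power of a nonzero prime ideal of `𝓞 K`. -/
def IsPrimeIdealPower {K : Type*} [Field K] [NumberField K] (𝔞 : Ideal (𝓞 K)) : Prop :=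
  ∃ (𝔭 : Ideal (𝓞 K)) (m : ℕ), 𝔭.IsPrime ∧ 𝔭 ≠ ⊥ ∧ 1 ≤ m ∧ 𝔞 = 𝔭 ^ m

/-- The von Mangoldt function on ideals of `𝓞 K`: `Λ_K(𝔭^m) = log N𝔭`, and `0` otherwise.
(For `𝔞 = 𝔭^m` with `𝔭` prime, the radical of `𝔞` is `𝔭`.) -/
def LambdaK (K : Type*) [Field K] [NumberField K] (𝔞 : Ideal (𝓞 K)) : ℝ :=
  if IsPrimeIdealPower 𝔞 then Real.log (absNorm 𝔞.radical) else 0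

/-- `ψ_K(x; q, a) = ∑_{N𝔭^m ≤ x, N𝔭^m ≡ a (mod q)} log N𝔭`. -/
def psiK (K : Type*) [Field K] [NumberField K] (x : ℝ) (q : ℕ) (a : ZMod q) : ℝ :=
  ∑' 𝔞 : Ideal (𝓞 K),
    if (absNorm 𝔞 : ℝ) ≤ x ∧ ((absNorm 𝔞 : ZMod q) = a) then LambdaK K 𝔞 else 0

/-- `G_q`: the image of `Gal(K(ζ_q)/K)` in `(ℤ/qℤ)ˣ` under restriction to `ℚ(ζ_q)` followed
by the canonical isomorphism `Gal(ℚ(ζ_q)/ℚ) ≅ (ℤ/qℤ)ˣ`; concretely, the range of the map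
sending `σ ∈ Gal(K(ζ_q)/K)` to the exponent `a ∈ (ℤ/qℤ)ˣ` with `σ(ζ_q) = ζ_q^a`. -/
def Gq (K : Type*) [Field K] [NumberField K] (q : ℕ) : Subgroup (ZMod q)ˣ :=
  if h : 0 < q then
    haveI : NeZero q := ⟨h.ne'⟩
    haveI : NeZero (((⟨q, h⟩ : ℕ+) : ℕ) : K) := ⟨Nat.cast_ne_zero.mpr h.ne'⟩
    ((IsCyclotomicExtension.zeta_spec (⟨q, h⟩ : ℕ+) K
        (CyclotomicField (⟨q, h⟩ : ℕ+) K)).autToPow K).range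
  else ⊥

/-- `φ_K(q) = |G_q|`. -/
def phiK (K : Type*) [Field K] [NumberField K] (q : ℕ) : ℕ :=
  Nat.card (Gq K q)

/-- `ψ_K(x, χ∘N) = ∑_{N𝔞 ≤ x} χ(N𝔞) Λ_K(𝔞)`. -/
def psiKChi (K : Type*) [Field K] [NumberField K] (x : ℝ) {q : ℕ}
    (χ : DirichletCharacter ℂ q) : ℂ :=
  ∑' 𝔞 : Ideal (𝓞 K),
    if (absNorm 𝔞 : ℝ) ≤ x then χ (absNorm 𝔞 : ZMod q) * (LambdaK K 𝔞 : ℂ) else 0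

/-- `ψ'_K(x, χ∘N)`: equals `ψ_K(x, χ∘N) − x` when `χ` is trivial on `G_q`,
and `ψ_K(x, χ∘N)` otherwise. -/
def psiKChi' (K : Type*) [Field K] [NumberField K] (x : ℝ) {q : ℕ}
    (χ : DirichletCharacter ℂ q) : ℂ :=
  if ∀ a ∈ Gq K q, χ (a : ZMod q) = 1 then psiKChi K x χ - x else psiKChi K x χ

/-- The common residue degree `f(K/ℚ; p)` of the primes of `K` above `p`
(well-defined when `K/ℚ` is Galois): any prime `𝔭` above `p` has `N𝔭 = p^f`. -/
def resDeg (K : Type*) [Field K] [NumberField K] (p : ℕ) : ℕ :=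
  if h : ∃ 𝔭 : Ideal (𝓞 K), 𝔭.IsPrime ∧ 𝔭 ≠ ⊥ ∧ (p : 𝓞 K) ∈ 𝔭 then
    (absNorm h.choose).factorization p
  else 0

/-- `D_K(n)`: the number of prime ideal powers `𝔭^m` of `𝓞 K` with `N𝔭^m = n`. -/
def DK (K : Type*) [Field K] [NumberField K] (n : ℕ) : ℕ :=
  Nat.card {𝔞 : Ideal (𝓞 K) // IsPrimeIdealPower 𝔞 ∧ absNorm 𝔞 = n}

/-- `Λ_K^*(n) = f(K/ℚ; p) · log p` if `n = p^k` is a prime power, and `0` otherwise. -/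
def LambdaStarK (K : Type*) [Field K] [NumberField K] (n : ℕ) : ℝ :=
  if IsPrimePow n then (resDeg K n.minFac : ℝ) * Real.log n.minFac else 0

end

/-!
If `p` lies under `g` primes of `𝓞 K`, with ramification indices `eᵢ` and residue degrees `fᵢ`, then
`∑ eᵢ fᵢ = [K : ℚ]`, so `g` and every `fᵢ` are at most `[K : ℚ]`. A prime ideal power is determined
by its radical and its norm, so `D_K(p ^ k) ≤ g`. Hence `D_K Λ_K^* ≤ [K : ℚ]² Λ`, and
`∑_{n ≤ x} Λ(n)² ≤ ψ(x) log x ≪ x log x` by Chebyshev's bound.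
-/

section PrimesOver

variable {A B : Type*} [CommRing A] [IsDomain A] [CommRing B] [Algebra A B]
  [Module.Finite A B] [Module.Flat A B]

variable (B) in
theorem card_primesOver_le_finrank (𝔭 : Ideal A) [𝔭.IsPrime] :
    Nat.card (𝔭.primesOver B) ≤ Module.finrank A B := by
  have := (Algebra.QuasiFinite.finite_primesOver (S := B) 𝔭).fintype
  rw [← sum_ramification_inertia_eq_finrank 𝔭 B, Nat.card_eq_fintype_card, Fintype.card,
    Finset.card_eq_sum_ones]
  exact Finset.sum_le_sum fun 𝔮 _ =>
    Nat.mul_pos (ramificationIdx_pos 𝔮.1 A) (inertiaDeg_pos 𝔮.1 A)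

theorem inertiaDeg_le_finrank (𝔮 : Ideal B) [𝔮.IsPrime] :
    𝔮.inertiaDeg A ≤ Module.finrank A B := by
  have := (Algebra.QuasiFinite.finite_primesOver (S := B) (𝔮.under A)).fintype
  rw [← sum_ramification_inertia_eq_finrank (𝔮.under A) B]
  let 𝔮' : (𝔮.under A).primesOver B := ⟨𝔮, ‹_›, inferInstance⟩
  calc 𝔮.inertiaDeg A ≤ 𝔮.ramificationIdx A * 𝔮.inertiaDeg A :=
        Nat.le_mul_of_pos_left _ (ramificationIdx_pos 𝔮 A)
    _ ≤ ∑ 𝔯 : (𝔮.under A).primesOver B, 𝔯.1.ramificationIdx A * 𝔯.1.inertiaDeg A :=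
        Finset.single_le_sum
          (f := fun 𝔯 : (𝔮.under A).primesOver B => 𝔯.1.ramificationIdx A * 𝔯.1.inertiaDeg A)
          (fun _ _ => Nat.zero_le _) (Finset.mem_univ 𝔮')

end PrimesOver

theorem liesOver_span_natCast_of_mem {R : Type*} [CommRing R] {p : ℕ} (hp : p.Prime) {I : Ideal R}
    (hI : I ≠ ⊤) (hmem : (p : R) ∈ I) : I.LiesOver (span {(p : ℤ)}) := by
  have : Fact p.Prime := ⟨hp⟩
  refine ⟨(Int.ideal_span_isMaximal_of_prime p).eq_of_le (comap_ne_top _ hI) ?_⟩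
  simpa [span_singleton_le_iff_mem, mem_comap] using hmem

theorem factorization_absNorm_eq_inertiaDeg {R : Type*} [CommRing R] [IsDedekindDomain R]
    [Module.Free ℤ R] [Module.Finite ℤ R] {p : ℕ} (hp : p.Prime) {𝔭 : Ideal R} [𝔭.IsPrime]
    (hmem : (p : R) ∈ 𝔭) : (absNorm 𝔭).factorization p = 𝔭.inertiaDeg ℤ := by
  have := liesOver_span_natCast_of_mem hp (IsPrime.ne_top ‹_›) hmem
  rw [← pow_inertiaDeg p 𝔭, hp.factorization_pow, Finsupp.single_eq_same]

namespace IsPrimeIdealPower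

variable {K : Type*} [Field K] [NumberField K] {𝔞 𝔟 : Ideal (𝓞 K)}

theorem radical_mem_primesOver (h𝔞 : IsPrimeIdealPower 𝔞) {p k : ℕ} (hp : p.Prime)
    (hnorm : absNorm 𝔞 = p ^ k) : 𝔞.radical ∈ primesOver (span {(p : ℤ)}) (𝓞 K) := by
  obtain ⟨𝔭, m, h𝔭, -, hm, rfl⟩ := h𝔞
  have hm0 : m ≠ 0 := Nat.one_le_iff_ne_zero.mp hm
  have hpk : (p : 𝓞 K) ^ k ∈ 𝔭 ^ m := by
    simpa only [hnorm, Nat.cast_pow] using absNorm_mem (𝔭 ^ m)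
  have hmem : (p : 𝓞 K) ∈ 𝔭 := h𝔭.mem_of_pow_mem k (pow_le_self hm0 hpk)
  rw [radical_pow 𝔭 hm0, h𝔭.radical]
  exact ⟨h𝔭, liesOver_span_natCast_of_mem hp h𝔭.ne_top hmem⟩

theorem eq_of_radical_eq_of_absNorm_eq (h𝔞 : IsPrimeIdealPower 𝔞) (h𝔟 : IsPrimeIdealPower 𝔟)
    (hrad : 𝔞.radical = 𝔟.radical) (hnorm : absNorm 𝔞 = absNorm 𝔟) : 𝔞 = 𝔟 := by
  obtain ⟨𝔭, m, h𝔭, h𝔭_ne_bot, hm, rfl⟩ := h𝔞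
  obtain ⟨𝔮, l, h𝔮, -, hl, rfl⟩ := h𝔟
  obtain rfl : 𝔭 = 𝔮 := by
    rwa [radical_pow 𝔭 (Nat.one_le_iff_ne_zero.mp hm), h𝔭.radical,
      radical_pow 𝔮 (Nat.one_le_iff_ne_zero.mp hl), h𝔮.radical] at hrad
  have h_one_lt : 1 < absNorm 𝔭 := (Nat.one_lt_iff_ne_zero_and_ne_one).mpr
    ⟨absNorm_eq_zero_iff.not.mpr h𝔭_ne_bot, absNorm_eq_one_iff.not.mpr h𝔭.ne_top⟩
  rw [map_pow, map_pow] at hnorm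
  rw [Nat.pow_right_injective h_one_lt hnorm]

end IsPrimeIdealPower

section NumberField

variable (K : Type*) [Field K] [NumberField K]

theorem resDeg_le_finrank {p : ℕ} (hp : p.Prime) : resDeg K p ≤ Module.finrank ℚ K := by
  rw [resDeg]
  split_ifs with h
  · have := h.choose_spec.1
    rw [factorization_absNorm_eq_inertiaDeg hp h.choose_spec.2.2, ← RingOfIntegers.rank K]
    exact inertiaDeg_le_finrank h.choose
  · exact Nat.zero_le _

theorem DK_le_finrank {n : ℕ} (hn : IsPrimePow n) : DK K n ≤ Module.finrank ℚ K := by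
  obtain ⟨p, k, hp, -, rfl⟩ := (isPrimePow_nat_iff n).mp hn
  have : Fact p.Prime := ⟨hp⟩
  let toRadical (𝔞 : {𝔞 : Ideal (𝓞 K) // IsPrimeIdealPower 𝔞 ∧ absNorm 𝔞 = p ^ k}) :
      primesOver (span {(p : ℤ)}) (𝓞 K) :=
    ⟨𝔞.1.radical, 𝔞.2.1.radical_mem_primesOver hp 𝔞.2.2⟩
  have toRadical_injective : Function.Injective toRadical := fun 𝔞 𝔟 h =>
    Subtype.ext <| 𝔞.2.1.eq_of_radical_eq_of_absNorm_eq 𝔟.2.1 (congrArg Subtype.val h)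
      (𝔞.2.2.trans 𝔟.2.2.symm)
  calc DK K (p ^ k) ≤ Nat.card (primesOver (span {(p : ℤ)}) (𝓞 K)) :=
        Nat.card_le_card_of_injective toRadical toRadical_injective
    _ ≤ Module.finrank ℤ (𝓞 K) := card_primesOver_le_finrank (𝓞 K) _
    _ = Module.finrank ℚ K := RingOfIntegers.rank K

theorem abs_DK_mul_LambdaStarK_le (n : ℕ) :
    |(DK K n : ℝ) * LambdaStarK K n| ≤
      (Module.finrank ℚ K : ℝ) ^ 2 * ArithmeticFunction.vonMangoldt n := by
  rw [ArithmeticFunction.vonMangoldt_apply, LambdaStarK]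
  split_ifs with hn
  · have hD : (DK K n : ℝ) ≤ Module.finrank ℚ K := mod_cast DK_le_finrank K hn
    have hf : (resDeg K n.minFac : ℝ) ≤ Module.finrank ℚ K :=
      mod_cast resDeg_le_finrank K (Nat.minFac_prime hn.ne_one)
    rw [abs_of_nonneg (by positivity), ← mul_assoc, sq]
    gcongr
  · simp

end NumberField

theorem sum_vonMangoldt_pow_succ_le (k : ℕ) (x : ℝ) :
    ∑ n ∈ Finset.Icc 1 ⌊x⌋₊, ArithmeticFunction.vonMangoldt n ^ (k + 1) ≤
      Real.log x ^ k * Chebyshev.psi x := by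
  rw [Chebyshev.psi, ← Finset.Icc_add_one_left_eq_Ioc, Finset.mul_sum]
  refine Finset.sum_le_sum fun n hn => ?_
  obtain ⟨hn_pos, hn_le⟩ := Finset.mem_Icc.mp hn
  have hΛ : ArithmeticFunction.vonMangoldt n ≤ Real.log x :=
    ArithmeticFunction.vonMangoldt_le_log.trans <| Real.log_le_log (mod_cast hn_pos) <|
      (Nat.le_floor_iff' (Nat.one_le_iff_ne_zero.mp hn_pos)).mp hn_le
  rw [pow_succ]
  gcongr

/-- For `K/ℚ` not Galois, `resDeg K p` is the residue degree of an unspecified prime above `p`. -/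
theorem sum_sq_DK_LambdaStar_general (K : Type*) [Field K] [NumberField K] {x : ℝ} (hx : 1 ≤ x) :
    ∑ n ∈ Finset.Icc 1 ⌊x⌋₊, ((DK K n : ℝ) * LambdaStarK K n) ^ 2 ≤
      (Module.finrank ℚ K : ℝ) ^ 4 * (Real.log 4 + 4) * (x * Real.log x) := by
  set d : ℝ := (Module.finrank ℚ K : ℝ)
  have : 0 ≤ Real.log x := Real.log_nonneg hx
  calc ∑ n ∈ Finset.Icc 1 ⌊x⌋₊, ((DK K n : ℝ) * LambdaStarK K n) ^ 2
      ≤ ∑ n ∈ Finset.Icc 1 ⌊x⌋₊, (d ^ 2 * ArithmeticFunction.vonMangoldt n) ^ 2 :=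
        Finset.sum_le_sum fun n _ =>
          sq_le_sq.mpr ((abs_DK_mul_LambdaStarK_le K n).trans (le_abs_self _))
    _ = d ^ 4 * ∑ n ∈ Finset.Icc 1 ⌊x⌋₊, ArithmeticFunction.vonMangoldt n ^ 2 := by
        simp only [mul_pow, ← pow_mul, Finset.mul_sum, Nat.reduceMul]
    _ ≤ d ^ 4 * (Real.log x * Chebyshev.psi x) := by
        gcongr
        simpa using sum_vonMangoldt_pow_succ_le 1 x
    _ ≤ d ^ 4 * (Real.log x * ((Real.log 4 + 4) * x)) := by
        gcongr
        exact Chebyshev.psi_le_const_mul_self (by linarith)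
    _ = d ^ 4 * (Real.log 4 + 4) * (x * Real.log x) := by ring

/-- For all `x ≥ 2`, `∑_{n ≤ x} (D_K(n) Λ_K^*(n))² ≪ x log x`,
the implied constant depending only on `K`. -/
theorem sum_sq_DK_LambdaStar (K : Type*) [Field K] [NumberField K] [IsGalois ℚ K] :
    ∃ C : ℝ, 0 < C ∧ ∀ x : ℝ, 2 ≤ x →
      ∑ n ∈ Finset.Icc 1 ⌊x⌋₊, ((DK K n : ℝ) * LambdaStarK K n) ^ 2 ≤
        C * (x * Real.log x) := by
  have hd : (0 : ℝ) < Module.finrank ℚ K := Nat.cast_pos.mpr Module.finrank_pos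
  have : 0 < Real.log 4 := Real.log_pos (by norm_num)
  exact ⟨_, by positivity, fun x hx => sum_sq_DK_LambdaStar_general K (one_le_two.trans hx)⟩
end

section
/- For all x ≥ 2 and all U, Q with 1 ≤ 2U ≤ Q, one has ∑_{U < q ≤ 2U} (1/φ(q))·log(2Q/q)·∑_{χ primitive mod q} |ψ'_K(x, χ∘N)|² ≪ (x/U + U)·x·log x·log(2Q/U), where the inner sum is over primitive Dirichlet characters modulo q and the implied constant depends only on K. -/
/-!
Setting: `K` is a number field, Galois over `ℚ`, with ring of integers `𝓞 K`.
We formalize the objects from Smith, "A generalization of the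
Barban-Davenport-Halberstam Theorem to number fields".
-/

open NumberField Ideal
open scoped Classical BigOperators

/-!
Up to the weights, the estimate is the large sieve applied to
`ψ_K(x, χ∘N) = ∑_{n ≤ x} (∑_{N𝔞 = n} Λ_K(𝔞)) χ(n)`.

* *Additive large sieve.* By duality one bounds `∑_n |∑_r b_r e(n α_r)|²` for `δ`-separated points
  `α_r` of the circle. Opening the square leaves squared moduli of geometric sums at `α_r - α_s`,
  which decay quadratically in the distance, so that the separation controls their row sums.
* *Multiplicative large sieve.* Distinct points of `ℝ/ℤ` of order at most `R` are `R⁻²`-separated,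
  and Gauss sums turn primitive characters mod `q` into the points of order `q`.
* *Coefficients.* Distinct primes above `p` divide `(p)`, whose norm is `p ^ [K : ℚ]`; hence
  `∑_{N𝔞 = n} Λ_K(𝔞) ≤ [K : ℚ] Λ(n)`, and Chebyshev's bound gives a sum of squares `≪ x log x`.
* *Main terms.* Since `G_q` has index at most `[K : ℚ]`, at most `[K : ℚ]` moduli carry a primitive
  character trivial on `G_q`. The subtracted `x` therefore contributes only `O_K(x²)`, which the
  factor `(x + R²) x log x` of the large sieve absorbs.

For `q > U` the weight `(1 / φ(q)) log (2Q / q)` is at most `(log (2Q / U) / U) (q / φ(q))`.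
-/

section GaloisImage

open IsCyclotomicExtension Polynomial

theorem unitsMap_autToPow {K L M : Type*} [Field K] [Field L] [Field M] [Algebra K L] [Algebra K M]
    [Algebra L M] [IsScalarTower K L M] [Normal K L] {q N : ℕ} [NeZero q] [NeZero N] {ζ : L} {η : M}
    (hζ : IsPrimitiveRoot ζ q) (hη : IsPrimitiveRoot η N) (hd : q ∣ N) (σ : M ≃ₐ[K] M) :
    ZMod.unitsMap hd (hη.autToPow K σ) = hζ.autToPow K (σ.restrictNormal L) := by
  set ξ := algebraMap L M ζ
  have hξ : IsPrimitiveRoot ξ q := hζ.map_of_injective (algebraMap L M).injective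
  obtain ⟨i, -, hi⟩ := hη.eq_pow_of_pow_eq_one ((hξ.pow_eq_one_iff_dvd N).mpr hd)
  have hM : σ ξ = ξ ^ (hη.autToPow K σ : ZMod N).val := by
    rw [← hi, map_pow, ← hη.autToPow_spec K σ, pow_right_comm]
  have hL : σ ξ = ξ ^ (hζ.autToPow K (σ.restrictNormal L) : ZMod q).val := by
    rw [← σ.restrictNormal_commutes L ζ, ← hζ.autToPow_spec K (σ.restrictNormal L), map_pow]
  have hmod := hM.symm.trans hL
  rw [(hξ.isOfFinOrder (NeZero.ne q)).pow_eq_pow_iff_modEq, ← hξ.eq_orderOf,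
    ← ZMod.natCast_eq_natCast_iff] at hmod
  ext
  simpa [ZMod.unitsMap_val, ZMod.natCast_val] using hmod

variable (K : Type*) [Field K] [NumberField K]

theorem Gq_eq_range (q : ℕ) [NeZero q] :
    Gq K q = ((zeta_spec q K (CyclotomicField q K)).autToPow K).range :=
  dif_pos (NeZero.pos q)

theorem card_Gq (q : ℕ) [NeZero q] :
    Nat.card (Gq K q) = Module.finrank K (CyclotomicField q K) := by
  have := IsCyclotomicExtension.isGalois {q} K (CyclotomicField q K)
  have := IsCyclotomicExtension.finiteDimensional {q} K (CyclotomicField q K)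
  rw [Gq_eq_range, ← IsGalois.card_aut_eq_finrank]
  exact (Nat.card_congr (MonoidHom.ofInjective
    ((zeta_spec q K (CyclotomicField q K)).autToPow_injective K)).toEquiv).symm

theorem totient_le_card_Gq_mul_finrank (q : ℕ) [NeZero q] :
    q.totient ≤ Nat.card (Gq K q) * Module.finrank ℚ K := by
  have := IsCyclotomicExtension.finiteDimensional {q} K (CyclotomicField q K)
  have : FiniteDimensional ℚ (CyclotomicField q K) := Module.Finite.trans K (CyclotomicField q K)
  have hζ := zeta_spec q K (CyclotomicField q K)
  rw [card_Gq, mul_comm, Module.finrank_mul_finrank]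
  have hirr : Irreducible (cyclotomic q ℚ) := cyclotomic.irreducible_rat (NeZero.pos q)
  simpa using hζ.lcm_totient_le_finrank hζ (by simpa using hirr)

theorem index_Gq_le_finrank (q : ℕ) [NeZero q] : (Gq K q).index ≤ Module.finrank ℚ K := by
  have h := totient_le_card_Gq_mul_finrank K q
  rw [← ZMod.card_units_eq_totient, ← Nat.card_eq_fintype_card, ← (Gq K q).card_mul_index] at h
  exact Nat.le_of_mul_le_mul_left h Nat.card_pos

theorem unitsMap_mem_Gq {q N : ℕ} [NeZero q] [NeZero N] (hd : q ∣ N) {a : (ZMod N)ˣ}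
    (ha : a ∈ Gq K N) : ZMod.unitsMap hd a ∈ Gq K q := by
  rw [Gq_eq_range] at ha ⊢
  obtain ⟨σ, rfl⟩ := ha
  have hN := zeta_spec N K (CyclotomicField N K)
  obtain ⟨e⟩ := nonempty_algEquiv_adjoin_of_exists_isPrimitiveRoot {q} K (CyclotomicField q K)
    (CyclotomicField N K) fun n hn _ ↦ hn ▸
      ⟨_, hN.pow (NeZero.pos N) (Nat.div_mul_cancel hd).symm⟩
  let f : CyclotomicField q K →ₐ[K] CyclotomicField N K := (IntermediateField.val _).comp e.toAlgHom
  let := f.toRingHom.toAlgebra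
  have := IsScalarTower.of_algHom f
  have := IsCyclotomicExtension.isGalois {q} K (CyclotomicField q K)
  exact ⟨_, (unitsMap_autToPow (zeta_spec q K (CyclotomicField q K)) hN hd σ).symm⟩

/-- The moduli of the primitive characters trivial on `G_q`, that is, of those for which `psiKChi'`
subtracts the main term `x`. The modulus `0` is excluded, as `Gq K 0` is trivial by convention. -/
def exceptionalModuli : Set ℕ :=
  {q | q ≠ 0 ∧ ∃ χ : DirichletCharacter ℂ q, χ.IsPrimitive ∧ ∀ a ∈ Gq K q, χ (a : ZMod q) = 1}

theorem changeLevel_eq_one_on_Gq {q N : ℕ} [NeZero q] [NeZero N] (hd : q ∣ N)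
    {χ : DirichletCharacter ℂ q} (hχ : ∀ a ∈ Gq K q, χ (a : ZMod q) = 1) {a : (ZMod N)ˣ}
    (ha : a ∈ Gq K N) : DirichletCharacter.changeLevel hd χ a = 1 := by
  rw [DirichletCharacter.changeLevel_eq_cast_of_dvd, ← ZMod.unitsMap_val hd]
  exact hχ _ (unitsMap_mem_Gq K hd ha)

-- Lifted to a common multiple `N` of the moduli, the characters remain distinct, having distinct
-- conductors, and they factor through the quotient of `(ℤ/N)ˣ` by `G_N`.
theorem card_le_finrank_of_subset_exceptionalModuli {T : Finset ℕ}
    (hT : ↑T ⊆ exceptionalModuli K) : T.card ≤ Module.finrank ℚ K := by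
  have hne : ∀ q : T, NeZero (q : ℕ) := fun q ↦ ⟨(hT q.2).1⟩
  have : NeZero (∏ q ∈ T, q) := ⟨Finset.prod_ne_zero_iff.mpr fun q hq ↦ (hT hq).1⟩
  set N := ∏ q ∈ T, q
  have hdvd : ∀ q : T, (q : ℕ) ∣ N := fun q ↦ Finset.dvd_prod_of_mem _ q.2
  choose χ hprim htriv using fun q : T ↦ (hT q.2).2
  let lift : T → (MulChar.subgroupOrderIsoSubgroupMulChar (ZMod N) ℂ (Gq K N)).ofDual := fun q ↦
    ⟨DirichletCharacter.changeLevel (hdvd q) (χ q),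
      MulChar.mem_subgroupOrderIsoSubgroupMulChar_iff.mpr
        fun _ ha ↦ changeLevel_eq_one_on_Gq K (hdvd q) (htriv q) ha⟩
  have hinj : Function.Injective lift := by
    intro q q' h
    have hcond := congrArg (fun ψ ↦ DirichletCharacter.conductor ψ.1) h
    simp only [lift, DirichletCharacter.conductor_changeLevel] at hcond
    exact Subtype.ext ((hprim q).symm.trans (hcond.trans (hprim q')))
  calc T.card = Nat.card T := by simp
    _ ≤ (Gq K N).index := (Nat.card_le_card_of_injective lift hinj).trans_eq
      MulChar.card_subgroupOrderIsoSubgroupMulChar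
    _ ≤ Module.finrank ℚ K := index_Gq_le_finrank K N

theorem finite_exceptionalModuli : (exceptionalModuli K).Finite := by
  by_contra hinf
  obtain ⟨T, hT, hcard⟩ :=
    Set.Infinite.exists_subset_card_eq hinf (Module.finrank ℚ K + 1)
  have := card_le_finrank_of_subset_exceptionalModuli K hT
  omega

end GaloisImage

section Duality

open scoped ComplexConjugate

theorem sum_norm_sq_le_of_dual {𝕜 ι κ : Type*} [RCLike 𝕜] (S : Finset ι) (T : Finset κ)
    (c : κ → ι → 𝕜) {H : ℝ} (hH0 : 0 ≤ H)
    (hH : ∀ b : ι → 𝕜, ∑ n ∈ T, ‖∑ r ∈ S, b r * c n r‖ ^ 2 ≤ H * ∑ r ∈ S, ‖b r‖ ^ 2)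
    (a : κ → 𝕜) : ∑ r ∈ S, ‖∑ n ∈ T, a n * c n r‖ ^ 2 ≤ H * ∑ n ∈ T, ‖a n‖ ^ 2 := by
  let s : ι → 𝕜 := fun r ↦ ∑ n ∈ T, a n * c n r
  let d : κ → 𝕜 := fun n ↦ ∑ r ∈ S, conj (s r) * c n r
  set X := ∑ r ∈ S, ‖s r‖ ^ 2
  have hX0 : 0 ≤ X := by positivity
  have hX : (X : 𝕜) = ∑ n ∈ T, a n * d n := by
    simp only [X, d, Finset.mul_sum]
    rw [Finset.sum_comm]
    push_cast
    refine Finset.sum_congr rfl fun r _ ↦ ?_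
    rw [← RCLike.mul_conj, Finset.sum_mul]
    exact Finset.sum_congr rfl fun n _ ↦ by ring
  have hXd : X ≤ ∑ n ∈ T, ‖a n‖ * ‖d n‖ :=
    calc X = ‖(X : 𝕜)‖ := by rw [RCLike.norm_ofReal, abs_of_nonneg hX0]
      _ ≤ ∑ n ∈ T, ‖a n * d n‖ := hX ▸ norm_sum_le _ _
      _ = _ := by simp only [norm_mul]
  have hd : ∑ n ∈ T, ‖d n‖ ^ 2 ≤ H * X := by
    simpa [d, X] using hH fun r ↦ conj (s r)
  have hsq : X * X ≤ (H * ∑ n ∈ T, ‖a n‖ ^ 2) * X :=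
    calc X * X ≤ (∑ n ∈ T, ‖a n‖ * ‖d n‖) ^ 2 := by rw [← sq]; gcongr
      _ ≤ (∑ n ∈ T, ‖a n‖ ^ 2) * ∑ n ∈ T, ‖d n‖ ^ 2 := Finset.sum_mul_sq_le_sq_mul_sq _ _ _
      _ ≤ (∑ n ∈ T, ‖a n‖ ^ 2) * (H * X) := by gcongr
      _ = _ := by ring
  rcases hX0.eq_or_lt with h0 | h0
  · rw [← h0]
    positivity
  · exact le_of_mul_le_mul_right hsq h0

theorem sum_mul_mul_le_of_row_sum_le {ι : Type*} (S : Finset ι) {w : ι → ι → ℝ} {H : ℝ}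
    (hw : ∀ r s, 0 ≤ w r s) (hsymm : ∀ r s, w r s = w s r)
    (hrow : ∀ s ∈ S, ∑ r ∈ S, w r s ≤ H) (b : ι → ℝ) :
    ∑ r ∈ S, ∑ s ∈ S, b r * b s * w r s ≤ H * ∑ s ∈ S, b s ^ 2 := by
  have hdiag : ∑ r ∈ S, ∑ s ∈ S, b s ^ 2 * w r s ≤ H * ∑ s ∈ S, b s ^ 2 := by
    rw [Finset.sum_comm, Finset.mul_sum]
    refine Finset.sum_le_sum fun s hs ↦ ?_
    rw [← Finset.mul_sum, mul_comm]
    exact mul_le_mul_of_nonneg_right (hrow s hs) (sq_nonneg _)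
  have hflip : ∑ r ∈ S, ∑ s ∈ S, b r ^ 2 * w r s = ∑ r ∈ S, ∑ s ∈ S, b s ^ 2 * w r s := by
    rw [Finset.sum_comm]
    simp only [hsymm]
  calc ∑ r ∈ S, ∑ s ∈ S, b r * b s * w r s
      ≤ ∑ r ∈ S, ∑ s ∈ S, (b r ^ 2 * w r s + b s ^ 2 * w r s) / 2 := by
        refine Finset.sum_le_sum fun r _ ↦ Finset.sum_le_sum fun s _ ↦ ?_
        nlinarith [mul_nonneg (sq_nonneg (b r - b s)) (hw r s)]
    _ = ∑ r ∈ S, ∑ s ∈ S, b s ^ 2 * w r s := by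
        simp only [← Finset.sum_div, Finset.sum_add_distrib, hflip, add_self_div_two]
    _ ≤ _ := hdiag

end Duality

section AdditiveLargeSieve

open Real Set
open scoped ComplexConjugate

-- Each index is matched with the multiple of `δ` lying just below `|t i|`; every multiple is used
-- at most once for either sign of `t i`.
theorem sum_abs_le_of_separated {ι : Type*} (S : Finset ι) (t : ι → ℝ) {δ : ℝ} (hδ : 0 < δ)
    (hsep : (S : Set ι).Pairwise fun i j ↦ δ ≤ |t i - t j|) {f : ℝ → ℝ} (hf : AntitoneOn f (Ici 0))
    (hf0 : ∀ u, 0 ≤ u → 0 ≤ f u) {A : ℝ} (hA : HasSum (fun k : ℕ ↦ f (k * δ)) A) :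
    ∑ i ∈ S, f |t i| ≤ 2 * A := by
  let g : ℤ → ℝ := Int.rec (fun k ↦ f (k * δ)) (fun k ↦ f (k * δ))
  have hg : HasSum g (2 * A) := two_mul A ▸ hA.int_rec hA
  have hg0 : ∀ m, 0 ≤ g m := by rintro (k | k) <;> exact hf0 _ (by positivity)
  have hinj : InjOn (fun i ↦ ⌊t i / δ⌋) S := by
    intro i hi j hj hij
    by_contra hne
    have hlt := Int.abs_sub_lt_one_of_floor_eq_floor hij
    rw [← sub_div, abs_div, abs_of_pos hδ, div_lt_one hδ] at hlt
    exact (hsep hi hj hne).not_gt hlt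
  have hle : ∀ i, f |t i| ≤ g ⌊t i / δ⌋ := by
    intro i
    have hlow := Int.floor_le (t i / δ)
    have hupp := Int.lt_floor_add_one (t i / δ)
    rw [le_div_iff₀ hδ] at hlow
    rw [div_lt_iff₀ hδ] at hupp
    rcases h : ⌊t i / δ⌋ with k | k <;> rw [h] at hlow hupp <;>
      refine hf (mem_Ici.mpr (by positivity)) (mem_Ici.mpr (abs_nonneg _)) ?_
    · exact (by simpa using hlow : k * δ ≤ t i).trans (le_abs_self _)
    · push_cast at hupp
      exact le_trans (by linarith) (neg_le_abs _)
  calc ∑ i ∈ S, f |t i| ≤ ∑ i ∈ S, g ⌊t i / δ⌋ := Finset.sum_le_sum fun i _ ↦ hle i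
    _ = ∑ m ∈ S.image fun i ↦ ⌊t i / δ⌋, g m := (Finset.sum_image hinj).symm
    _ ≤ _ := sum_le_hasSum _ (fun m _ ↦ hg0 m) hg

theorem exists_coe_eq_and_abs_eq_norm (t : UnitAddCircle) :
    ∃ y : ℝ, (y : UnitAddCircle) = t ∧ |y| = ‖t‖ := by
  obtain ⟨x, rfl⟩ := QuotientAddGroup.mk_surjective t
  refine ⟨x - round x, ?_, UnitAddCircle.norm_eq.symm⟩
  have hround : ((round x : ℝ) : UnitAddCircle) = 0 :=
    (AddCircle.coe_eq_zero_iff 1).mpr ⟨round x, by simp⟩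
  rw [AddCircle.coe_sub, hround, sub_zero]

theorem four_mul_norm_le_norm_fourier_one_sub_one (t : UnitAddCircle) :
    4 * ‖t‖ ≤ ‖fourier 1 t - 1‖ := by
  obtain ⟨y, rfl, hy⟩ := exists_coe_eq_and_abs_eq_norm t
  have hhalf : ‖(y : UnitAddCircle)‖ ≤ 1 / 2 := by
    simpa using AddCircle.norm_le_half_period 1 one_ne_zero (x := (y : UnitAddCircle))
  have hexp : fourier 1 (y : UnitAddCircle) = Complex.exp (Complex.I * (2 * π * y : ℝ)) := by
    rw [fourier_coe_apply]
    congr 1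
    push_cast
    ring
  have hsin : 2 / π * |π * y| ≤ |sin (π * y)| := by
    refine mul_abs_le_abs_sin ?_
    rw [abs_mul, abs_of_pos pi_pos, hy]
    nlinarith [pi_pos]
  rw [hexp, Complex.norm_exp_I_mul_ofReal_sub_one, norm_mul, norm_two, norm_eq_abs,
    show 2 * π * y / 2 = π * y by ring, ← hy]
  rw [abs_mul, abs_of_pos pi_pos, ← mul_assoc, div_mul_cancel₀ _ pi_ne_zero] at hsin
  linarith

theorem norm_fourier_apply (n : ℤ) (t : UnitAddCircle) : ‖fourier n t‖ = 1 := by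
  rw [fourier_apply, Circle.norm_coe]

theorem fourier_neg_apply (n : ℤ) (t : UnitAddCircle) : fourier n (-t) = conj (fourier n t) := by
  rw [← fourier_neg, fourier_apply, fourier_apply, smul_neg, neg_smul]

theorem fourier_sub_apply (n : ℤ) (s t : UnitAddCircle) :
    fourier n (s - t) = fourier n s * conj (fourier n t) := by
  rw [← fourier_neg_apply, sub_eq_add_neg]
  simp only [fourier_apply, smul_add, AddCircle.toCircle_add, Circle.coe_mul]

/-- The geometric sum of the first `L` characters of the circle, a one-sided Dirichlet kernel. -/
noncomputable def geomKernel (L : ℕ) (t : UnitAddCircle) : ℂ :=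
  ∑ k ∈ Finset.range L, fourier k t

theorem norm_geomKernel_le (L : ℕ) (t : UnitAddCircle) : ‖geomKernel L t‖ ≤ L :=
  (norm_sum_le _ _).trans_eq (by simp only [norm_fourier_apply]; simp)

theorem norm_geomKernel_neg (L : ℕ) (t : UnitAddCircle) :
    ‖geomKernel L (-t)‖ = ‖geomKernel L t‖ := by
  simp only [geomKernel, fourier_neg_apply, ← map_sum, RCLike.norm_conj]

theorem norm_geomKernel_mul_norm_le (L : ℕ) (t : UnitAddCircle) :
    ‖geomKernel L t‖ * ‖t‖ ≤ 1 / 2 := by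
  have hgeom : geomKernel L t * (fourier 1 t - 1) = fourier L t - 1 := by
    have hpow : ∀ k : ℕ, fourier (k : ℤ) t = fourier 1 t ^ k := fun k ↦ by
      simp [fourier_apply, AddCircle.toCircle_nsmul]
    simp only [geomKernel, hpow, geom_sum_mul]
  have hle : ‖geomKernel L t‖ * ‖fourier 1 t - 1‖ ≤ 2 := by
    rw [← norm_mul, hgeom]
    exact (norm_sub_le _ _).trans_eq (by rw [norm_fourier_apply, norm_one, one_add_one_eq_two])
  nlinarith [four_mul_norm_le_norm_fourier_one_sub_one t, norm_nonneg (geomKernel L t)]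

theorem norm_geomKernel_sq_le (L : ℕ) (t : UnitAddCircle) :
    ‖geomKernel L t‖ ^ 2 ≤ 2 * L ^ 2 / (1 + (2 * L * ‖t‖) ^ 2) := by
  rw [le_div_iff₀ (by positivity)]
  have h1 : ‖geomKernel L t‖ ^ 2 ≤ L ^ 2 := by gcongr; exact norm_geomKernel_le L t
  have h2 : (‖geomKernel L t‖ * ‖t‖) ^ 2 ≤ (1 / 2) ^ 2 := by
    gcongr; exact norm_geomKernel_mul_norm_le L t
  nlinarith [mul_le_mul_of_nonneg_left h2 (sq_nonneg (L : ℝ))]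

theorem exists_hasSum_one_div_one_add_sq_le {c : ℝ} (hc : c ≠ 0) :
    ∃ A ≤ 1 + 2 / c ^ 2, HasSum (fun k : ℕ ↦ 1 / (1 + (c * k) ^ 2)) A := by
  have hmajor : HasSum (fun k : ℕ ↦ (if k = 0 then (1 : ℝ) else 0) + 1 / c ^ 2 * (1 / (k : ℝ) ^ 2))
      (1 + 1 / c ^ 2 * (π ^ 2 / 6)) :=
    (hasSum_ite_eq 0 1).add (hasSum_zeta_two.mul_left _)
  have hle : ∀ k : ℕ,
      1 / (1 + (c * k) ^ 2) ≤ (if k = 0 then (1 : ℝ) else 0) + 1 / c ^ 2 * (1 / (k : ℝ) ^ 2) := by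
    intro k
    rcases eq_or_ne k 0 with rfl | hk
    · simp
    · rw [if_neg hk, zero_add, one_div_mul_one_div, ← mul_pow]
      gcongr
      linarith
  have hsum := hmajor.summable.of_nonneg_of_le (fun k ↦ by positivity) hle
  have hpi : π ^ 2 / 6 ≤ 2 := by nlinarith [pi_lt_d2, pi_pos]
  refine ⟨_, (hasSum_le hle hsum.hasSum hmajor).trans ?_, hsum.hasSum⟩
  rw [div_eq_mul_one_div 2, mul_comm 2]
  gcongr

theorem sum_norm_geomKernel_sq_le {ι : Type*} (S : Finset ι) (α : ι → UnitAddCircle) {δ : ℝ}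
    (hδ : 0 < δ) (hsep : (S : Set ι).Pairwise fun i j ↦ δ ≤ ‖α i - α j‖) (L : ℕ)
    (β : UnitAddCircle) : ∑ i ∈ S, ‖geomKernel L (α i - β)‖ ^ 2 ≤ 4 * L ^ 2 + 2 / δ ^ 2 := by
  rcases L.eq_zero_or_pos with rfl | hL
  · suffices 0 ≤ 2 / δ ^ 2 by simpa [geomKernel] using this
    positivity
  choose t htα ht using fun i ↦ exists_coe_eq_and_abs_eq_norm (α i - β)
  have hsep' : (S : Set ι).Pairwise fun i j ↦ δ ≤ |t i - t j| := by
    intro i hi j hj hij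
    calc δ ≤ ‖((t i - t j : ℝ) : UnitAddCircle)‖ := by
          rw [AddCircle.coe_sub, htα, htα, sub_sub_sub_cancel_right]
          exact hsep hi hj hij
      _ ≤ |t i - t j| := QuotientAddGroup.norm_mk_le_norm
  have hanti : AntitoneOn (fun u : ℝ ↦ 1 / (1 + (2 * L * u) ^ 2)) (Ici 0) := by
    intro u hu v _ huv
    have := mem_Ici.mp hu
    dsimp only
    gcongr
  obtain ⟨A, hA, hsum⟩ := exists_hasSum_one_div_one_add_sq_le (c := 2 * L * δ) (by positivity)
  have hsum' : HasSum (fun k : ℕ ↦ 1 / (1 + (2 * L * (k * δ)) ^ 2)) A := by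
    simpa only [mul_assoc, mul_comm δ] using hsum
  calc ∑ i ∈ S, ‖geomKernel L (α i - β)‖ ^ 2
      ≤ ∑ i ∈ S, 2 * L ^ 2 * (1 / (1 + (2 * L * |t i|) ^ 2)) := by
        refine Finset.sum_le_sum fun i _ ↦ ?_
        rw [mul_one_div, ht]
        exact norm_geomKernel_sq_le L _
    _ ≤ 2 * L ^ 2 * (2 * A) := by
        rw [← Finset.mul_sum]
        gcongr
        exact sum_abs_le_of_separated S t hδ hsep' hanti (fun u _ ↦ by positivity) hsum'
    _ ≤ 2 * L ^ 2 * (2 * (1 + 2 / (2 * L * δ) ^ 2)) := by gcongr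
    _ = 4 * L ^ 2 + 2 / δ ^ 2 := by
        field_simp
        ring

variable {ι : Type*}

theorem sum_range_product_norm_sq_eq (S : Finset ι) (α : ι → UnitAddCircle) (b : ι → ℂ) (L : ℕ) :
    ((∑ p ∈ Finset.range L ×ˢ Finset.range L,
        ‖∑ r ∈ S, b r * fourier ((p.1 : ℤ) - p.2) (α r)‖ ^ 2 : ℝ) : ℂ) =
      ∑ r ∈ S, ∑ s ∈ S, b r * conj (b s) * ‖geomKernel L (α r - α s)‖ ^ 2 := by
  have hker : ∀ t, (‖geomKernel L t‖ ^ 2 : ℂ) =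
      ∑ p ∈ Finset.range L ×ˢ Finset.range L, fourier ((p.1 : ℤ) - p.2) t := by
    intro t
    rw [← Complex.mul_conj', geomKernel, map_sum, Finset.sum_mul_sum, Finset.sum_product]
    simp only [sub_eq_add_neg, fourier_add, fourier_neg]
  push_cast
  simp_rw [hker, fourier_sub_apply, ← Complex.mul_conj', map_sum, map_mul, Finset.sum_mul_sum,
    Finset.mul_sum]
  rw [Finset.sum_comm]
  refine Finset.sum_congr rfl fun r _ ↦ ?_
  rw [Finset.sum_comm]
  exact Finset.sum_congr rfl fun s _ ↦ Finset.sum_congr rfl fun p _ ↦ mul_mul_mul_comm _ _ _ _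

theorem mul_sum_range_le_sum_range_product_sub {B : ℤ → ℝ} (hB : ∀ m, 0 ≤ B m) (M : ℕ) :
    M * ∑ n ∈ Finset.range M, B n ≤
      ∑ p ∈ Finset.range (2 * M) ×ˢ Finset.range (2 * M), B ((p.1 : ℤ) - p.2) := by
  have hinj : (fun p : ℕ × ℕ ↦ (p.1 + p.2, p.2)).Injective := fun p p' h ↦ by
    simp only [Prod.mk.injEq] at h
    ext <;> omega
  calc M * ∑ n ∈ Finset.range M, B n
      = ∑ p ∈ Finset.range M ×ˢ Finset.range M, B p.1 := by
        simp [Finset.sum_product, Finset.mul_sum]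
    _ = ∑ p ∈ (Finset.range M ×ˢ Finset.range M).map ⟨_, hinj⟩, B ((p.1 : ℤ) - p.2) := by
        simp
    _ ≤ _ := by
        refine Finset.sum_le_sum_of_subset_of_nonneg ?_ fun _ _ _ ↦ hB _
        intro p hp
        simp only [Finset.mem_map, Finset.mem_product, Finset.mem_range,
          Function.Embedding.coeFn_mk] at hp ⊢
        obtain ⟨a, ha, rfl⟩ := hp
        simp only
        omega

variable {S : Finset ι} {α : ι → UnitAddCircle} {δ : ℝ}

-- Majorising the sum over `n < M` by the sum over all differences of two integers below `2M`
-- weights the exponential sums so that their squares expand into values of `‖geomKernel‖²`.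
theorem dual_additive_large_sieve (hδ : 0 < δ)
    (hsep : (S : Set ι).Pairwise fun i j ↦ δ ≤ ‖α i - α j‖) (b : ι → ℂ) (M : ℕ) :
    M * ∑ n ∈ Finset.range M, ‖∑ r ∈ S, b r * fourier n (α r)‖ ^ 2 ≤
      (16 * M ^ 2 + 2 / δ ^ 2) * ∑ r ∈ S, ‖b r‖ ^ 2 := by
  refine (mul_sum_range_le_sum_range_product_sub
    (B := fun m ↦ ‖∑ r ∈ S, b r * fourier m (α r)‖ ^ 2) (fun m ↦ sq_nonneg _) M).trans ?_
  set X := ∑ p ∈ Finset.range (2 * M) ×ˢ Finset.range (2 * M),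
    ‖∑ r ∈ S, b r * fourier ((p.1 : ℤ) - p.2) (α r)‖ ^ 2
  let w : ι → ι → ℝ := fun r s ↦ ‖geomKernel (2 * M) (α r - α s)‖ ^ 2
  have hrow : ∀ s ∈ S, ∑ r ∈ S, w r s ≤ 16 * M ^ 2 + 2 / δ ^ 2 := fun s _ ↦
    (sum_norm_geomKernel_sq_le S α hδ hsep (2 * M) (α s)).trans_eq (by push_cast; ring)
  calc X ≤ ‖(X : ℂ)‖ := by rw [Complex.norm_real]; exact le_norm_self _
    _ ≤ ∑ r ∈ S, ∑ s ∈ S, ‖b r‖ * ‖b s‖ * w r s := by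
        rw [sum_range_product_norm_sq_eq]
        refine (norm_sum_le _ _).trans (Finset.sum_le_sum fun r _ ↦
          (norm_sum_le _ _).trans_eq (Finset.sum_congr rfl fun s _ ↦ ?_))
        simp [w]
    _ ≤ _ := sum_mul_mul_le_of_row_sum_le S (fun r s ↦ sq_nonneg _)
        (fun r s ↦ by simp only [← norm_geomKernel_neg _ (α r - α s), neg_sub]) hrow _

theorem additive_large_sieve (hδ : 0 < δ)
    (hsep : (S : Set ι).Pairwise fun i j ↦ δ ≤ ‖α i - α j‖) (N : ℕ) (a : ℕ → ℂ) :
    ∑ r ∈ S, ‖∑ n ∈ Finset.range N, a n * fourier n (α r)‖ ^ 2 ≤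
      18 * (N + 1 / δ + 1) * ∑ n ∈ Finset.range N, ‖a n‖ ^ 2 := by
  refine sum_norm_sq_le_of_dual S (Finset.range N) (fun n r ↦ fourier n (α r)) (by positivity)
    (fun b ↦ ?_) a
  set M := N + ⌈1 / δ⌉₊
  have hδM : 1 / δ ≤ M := (Nat.le_ceil _).trans (by simp [M])
  have hM : (0 : ℝ) < M := (one_div_pos.mpr hδ).trans_le hδM
  have hMle : (M : ℝ) ≤ N + 1 / δ + 1 := by
    have := Nat.ceil_lt_add_one (one_div_pos.mpr hδ).le
    push_cast [M]
    linarith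
  refine le_of_mul_le_mul_left ?_ hM
  calc M * ∑ n ∈ Finset.range N, ‖∑ r ∈ S, b r * fourier n (α r)‖ ^ 2
      ≤ M * ∑ n ∈ Finset.range M, ‖∑ r ∈ S, b r * fourier n (α r)‖ ^ 2 := by
        gcongr
        simp [M]
    _ ≤ (16 * M ^ 2 + 2 * (1 / δ) ^ 2) * ∑ r ∈ S, ‖b r‖ ^ 2 := by
        rw [one_div_pow, mul_one_div]
        exact dual_additive_large_sieve hδ hsep b M
    _ ≤ (16 * M ^ 2 + 2 * M ^ 2) * ∑ r ∈ S, ‖b r‖ ^ 2 := by gcongr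
    _ = M * (18 * M * ∑ r ∈ S, ‖b r‖ ^ 2) := by ring
    _ ≤ _ := by gcongr

end AdditiveLargeSieve

section FareyPoints

/-- The points of order at most `R` on the circle `ℝ/ℤ`, that is, the classes mod `1` of the
fractions with denominator at most `R`. -/
noncomputable def fareyPoints (R : ℕ) : Finset UnitAddCircle :=
  (Finset.Icc 1 R).attach.biUnion fun q ↦
    (AddCircle.finite_setOfPred_addOrderOf_eq (1 : ℝ) (Finset.mem_Icc.mp q.2).1).toFinset

theorem mem_fareyPoints {R : ℕ} {t : UnitAddCircle} :
    t ∈ fareyPoints R ↔ addOrderOf t ∈ Finset.Icc 1 R := by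
  simp [fareyPoints]

theorem one_div_mul_addOrderOf_le_norm_sub {s t : UnitAddCircle} (hs : IsOfFinAddOrder s)
    (ht : IsOfFinAddOrder t) (hst : s ≠ t) :
    1 / (addOrderOf s * addOrderOf t : ℝ) ≤ ‖s - t‖ := by
  have hdvd : addOrderOf (s - t) ∣ addOrderOf s * addOrderOf t := by
    simpa [sub_eq_add_neg] using (AddCommute.all s (-t)).addOrderOf_add_dvd_mul_addOrderOf
  have hpos : 0 < addOrderOf s * addOrderOf t := Nat.mul_pos hs.addOrderOf_pos ht.addOrderOf_pos
  have hle : (addOrderOf (s - t) : ℝ) ≤ addOrderOf s * addOrderOf t := by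
    exact_mod_cast Nat.le_of_dvd hpos hdvd
  rw [div_le_iff₀ (by exact_mod_cast hpos), mul_comm]
  calc (1 : ℝ) ≤ addOrderOf (s - t) * ‖s - t‖ := by
        simpa using AddCircle.le_add_order_smul_norm_of_isOfFinAddOrder
          (addOrderOf_pos_iff.mp (Nat.pos_of_dvd_of_pos hdvd hpos)) (sub_ne_zero.mpr hst)
    _ ≤ addOrderOf s * addOrderOf t * ‖s - t‖ := by gcongr

theorem pairwise_fareyPoints_one_div_sq_le (R : ℕ) :
    (fareyPoints R : Set UnitAddCircle).Pairwise fun s t ↦ 1 / (R : ℝ) ^ 2 ≤ ‖s - t‖ := by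
  intro s hs t ht hst
  obtain ⟨hs0, hsR⟩ := Finset.mem_Icc.mp (mem_fareyPoints.mp hs)
  obtain ⟨ht0, htR⟩ := Finset.mem_Icc.mp (mem_fareyPoints.mp ht)
  refine le_trans ?_ (one_div_mul_addOrderOf_le_norm_sub (addOrderOf_pos_iff.mp hs0)
    (addOrderOf_pos_iff.mp ht0) hst)
  rw [sq]
  gcongr

theorem addOrderOf_toAddCircle_unit {q : ℕ} [NeZero q] (a : (ZMod q)ˣ) :
    addOrderOf (ZMod.toAddCircle (a : ZMod q)) = q := by
  rw [addOrderOf_injective _ (ZMod.toAddCircle_injective q), ← ZMod.natCast_zmod_val (a : ZMod q),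
    ZMod.addOrderOf_coe _ (NeZero.ne q), (ZMod.val_coe_unit_coprime a).symm.gcd_eq_one, Nat.div_one]

theorem sum_units_toAddCircle_le {q R : ℕ} [NeZero q] (hq : q ≤ R) {f : UnitAddCircle → ℝ}
    (hf : 0 ≤ f) :
    ∑ a : (ZMod q)ˣ, f (ZMod.toAddCircle (a : ZMod q)) ≤
      ∑ t ∈ fareyPoints R with addOrderOf t = q, f t := by
  have hinj : Function.Injective fun a : (ZMod q)ˣ ↦ ZMod.toAddCircle (a : ZMod q) :=
    (ZMod.toAddCircle_injective q).comp Units.val_injective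
  rw [← Finset.sum_image hinj.injOn]
  refine Finset.sum_le_sum_of_subset_of_nonneg (fun t ht ↦ ?_) fun t _ _ ↦ hf t
  obtain ⟨a, -, rfl⟩ := Finset.mem_image.mp ht
  simp only [Finset.mem_filter, mem_fareyPoints, addOrderOf_toAddCircle_unit, Finset.mem_Icc]
  exact ⟨⟨NeZero.pos q, hq⟩, trivial⟩

end FareyPoints

section MultiplicativeLargeSieve

open scoped ComplexConjugate

theorem conj_dirichletCharacter_apply {q : ℕ} (χ : DirichletCharacter ℂ q) (a : ZMod q) :
    conj (χ a) = χ⁻¹ a := MulChar.star_apply' χ a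

variable {q : ℕ} [NeZero q]

theorem norm_gaussSum_sq {χ : DirichletCharacter ℂ q} (hχ : χ.IsPrimitive)
    {e : AddChar (ZMod q) ℂ} (he : e.IsPrimitive) : ‖gaussSum χ e‖ ^ 2 = q := by
  have horth : ∀ b : ZMod q, ∑ a, e (a * (b - 1)) = if b = 1 then (q : ℂ) else 0 := fun b ↦ by
    rw [AddChar.sum_mulShift _ he, ZMod.card, Nat.cast_ite, Nat.cast_zero]
    simp only [sub_eq_zero]
  have h : (‖gaussSum χ e‖ ^ 2 : ℂ) = q := by
    calc (‖gaussSum χ e‖ ^ 2 : ℂ)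
        = ∑ a, conj (χ a * e a) * gaussSum χ e := by
          rw [← Complex.conj_mul', ← Finset.sum_mul, ← map_sum, gaussSum]
      _ = ∑ a, e (-a) * gaussSum χ (e.mulShift a) := by
          refine Finset.sum_congr rfl fun a _ ↦ ?_
          rw [gaussSum_mulShift_of_isPrimitive e hχ, map_mul, AddChar.map_neg_eq_conj,
            conj_dirichletCharacter_apply]
          ring
      _ = ∑ b, χ b * ∑ a, e (a * (b - 1)) := by
          simp_rw [gaussSum, Finset.mul_sum]
          rw [Finset.sum_comm]
          refine Finset.sum_congr rfl fun b _ ↦ Finset.sum_congr rfl fun a _ ↦ ?_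
          rw [AddChar.mulShift_apply, mul_left_comm, ← AddChar.map_add_eq_mul]
          ring_nf
      _ = q := by simp [horth]
  exact_mod_cast h

theorem sum_units_char_mul {χ : DirichletCharacter ℂ q} (F : ZMod q → ℂ) :
    ∑ a : (ZMod q)ˣ, χ (a : ZMod q) * F a = ∑ a, χ a * F a := by
  refine Finset.sum_of_injOn (fun a : (ZMod q)ˣ ↦ (a : ZMod q)) Units.val_injective.injOn
    (by simp) (fun a _ ha ↦ ?_) (by simp)
  rw [MulChar.map_nonunit _ fun h ↦ ha ⟨h.unit, by simp⟩, zero_mul]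

theorem sum_norm_sum_units_char_mul_sq (f : (ZMod q)ˣ → ℂ) :
    ∑ χ : DirichletCharacter ℂ q, ‖∑ a : (ZMod q)ˣ, χ (a : ZMod q) * f a‖ ^ 2 =
      q.totient * ∑ a, ‖f a‖ ^ 2 := by
  have horth : ∀ a b : (ZMod q)ˣ,
      ∑ χ : DirichletCharacter ℂ q, conj (χ (a : ZMod q)) * χ (b : ZMod q) =
        if a = b then (q.totient : ℂ) else 0 := fun a b ↦ by
    simp_rw [conj_dirichletCharacter_apply, MulChar.inv_apply, Ring.inverse_unit,
      ← ZMod.inv_coe_unit, DirichletCharacter.sum_char_inv_mul_char_eq ℂ a.isUnit, Units.val_inj]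
  have h : ∑ χ : DirichletCharacter ℂ q, (‖∑ a : (ZMod q)ˣ, χ (a : ZMod q) * f a‖ ^ 2 : ℂ) =
      q.totient * ∑ a, (‖f a‖ ^ 2 : ℂ) := by
    calc ∑ χ : DirichletCharacter ℂ q, (‖∑ a : (ZMod q)ˣ, χ (a : ZMod q) * f a‖ ^ 2 : ℂ)
        = ∑ χ : DirichletCharacter ℂ q, ∑ a : (ZMod q)ˣ, ∑ b : (ZMod q)ˣ,
            conj (χ (a : ZMod q)) * χ (b : ZMod q) * (conj (f a) * f b) := by
          simp_rw [← Complex.conj_mul', map_sum, Finset.sum_mul_sum, map_mul, mul_mul_mul_comm]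
      _ = ∑ a : (ZMod q)ˣ, ∑ b : (ZMod q)ˣ,
            (∑ χ : DirichletCharacter ℂ q, conj (χ (a : ZMod q)) * χ (b : ZMod q)) *
              (conj (f a) * f b) := by
          simp_rw [Finset.sum_mul]
          rw [Finset.sum_comm]
          exact Finset.sum_congr rfl fun a _ ↦ Finset.sum_comm
      _ = q.totient * ∑ a, (‖f a‖ ^ 2 : ℂ) := by
          simp [horth, Complex.conj_mul', Finset.mul_sum]
  exact_mod_cast h

theorem fourier_toAddCircle (n : ℕ) (a : ZMod q) :
    fourier n (ZMod.toAddCircle a) = ZMod.stdAddChar ((n : ZMod q) * a) := by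
  rw [fourier_apply, natCast_zsmul, ← map_nsmul, nsmul_eq_mul]
  rfl

theorem sum_units_inv_char_mul_sum_fourier {χ : DirichletCharacter ℂ q} (hχ : χ⁻¹.IsPrimitive)
    (N : ℕ) (c : ℕ → ℂ) :
    ∑ a : (ZMod q)ˣ, χ⁻¹ (a : ZMod q) *
        ∑ n ∈ Finset.range N, c n * fourier n (ZMod.toAddCircle (a : ZMod q)) =
      gaussSum χ⁻¹ ZMod.stdAddChar * ∑ n ∈ Finset.range N, c n * χ (n : ZMod q) := by
  rw [sum_units_char_mul fun a ↦ ∑ n ∈ Finset.range N, c n * fourier n (ZMod.toAddCircle a)]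
  simp_rw [Finset.mul_sum]
  rw [Finset.sum_comm]
  refine Finset.sum_congr rfl fun n _ ↦ ?_
  have hshift := gaussSum_mulShift_of_isPrimitive ZMod.stdAddChar hχ (n : ZMod q)
  rw [inv_inv] at hshift
  rw [mul_left_comm, mul_comm (gaussSum _ _), ← hshift, gaussSum, Finset.mul_sum]
  refine Finset.sum_congr rfl fun a _ ↦ ?_
  rw [AddChar.mulShift_apply, fourier_toAddCircle, mul_left_comm]

theorem sum_isPrimitive_norm_sq_le (N : ℕ) (c : ℕ → ℂ) :
    ∑ χ : DirichletCharacter ℂ q with χ.IsPrimitive,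
        ‖∑ n ∈ Finset.range N, c n * χ (n : ZMod q)‖ ^ 2 ≤
      q.totient / q * ∑ a : (ZMod q)ˣ,
        ‖∑ n ∈ Finset.range N, c n * fourier n (ZMod.toAddCircle (a : ZMod q))‖ ^ 2 := by
  let f : (ZMod q)ˣ → ℂ := fun a ↦
    ∑ n ∈ Finset.range N, c n * fourier n (ZMod.toAddCircle (a : ZMod q))
  have hq : (0 : ℝ) < q := by exact_mod_cast NeZero.pos q
  have hgauss : ∀ χ : DirichletCharacter ℂ q, χ.IsPrimitive →
      q * ‖∑ n ∈ Finset.range N, c n * χ (n : ZMod q)‖ ^ 2 =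
        ‖∑ a : (ZMod q)ˣ, χ⁻¹ (a : ZMod q) * f a‖ ^ 2 := by
    intro χ hχ
    have hχ' : χ⁻¹.IsPrimitive := by
      rwa [DirichletCharacter.isPrimitive_def, DirichletCharacter.conductor_inv]
    rw [sum_units_inv_char_mul_sum_fourier hχ', norm_mul, mul_pow,
      norm_gaussSum_sq hχ' (ZMod.isPrimitive_stdAddChar q)]
  rw [div_mul_eq_mul_div, le_div_iff₀ hq, mul_comm, Finset.mul_sum]
  calc ∑ χ : DirichletCharacter ℂ q with χ.IsPrimitive,
        q * ‖∑ n ∈ Finset.range N, c n * χ (n : ZMod q)‖ ^ 2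
      = ∑ χ : DirichletCharacter ℂ q with χ.IsPrimitive,
          ‖∑ a : (ZMod q)ˣ, χ⁻¹ (a : ZMod q) * f a‖ ^ 2 :=
        Finset.sum_congr rfl fun χ h ↦ hgauss χ (Finset.mem_filter.mp h).2
    _ ≤ ∑ χ : DirichletCharacter ℂ q, ‖∑ a : (ZMod q)ˣ, χ⁻¹ (a : ZMod q) * f a‖ ^ 2 :=
        Finset.sum_le_sum_of_subset_of_nonneg (Finset.filter_subset _ _) fun _ _ _ ↦ sq_nonneg _
    _ = ∑ χ : DirichletCharacter ℂ q, ‖∑ a : (ZMod q)ˣ, χ (a : ZMod q) * f a‖ ^ 2 :=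
        Equiv.sum_comp (Equiv.inv _) fun χ : DirichletCharacter ℂ q ↦
          ‖∑ a : (ZMod q)ˣ, χ (a : ZMod q) * f a‖ ^ 2
    _ = q.totient * ∑ a : (ZMod q)ˣ, ‖f a‖ ^ 2 := sum_norm_sum_units_char_mul_sq f

theorem multiplicative_large_sieve (R N : ℕ) (c : ℕ → ℂ) :
    ∑ q ∈ Finset.Icc 1 R, (q / q.totient : ℝ) *
        ∑ χ : DirichletCharacter ℂ q with χ.IsPrimitive,
          ‖∑ n ∈ Finset.range N, c n * χ (n : ZMod q)‖ ^ 2 ≤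
      18 * (N + (R : ℝ) ^ 2 + 1) * ∑ n ∈ Finset.range N, ‖c n‖ ^ 2 := by
  set f : UnitAddCircle → ℝ := fun t ↦ ‖∑ n ∈ Finset.range N, c n * fourier n t‖ ^ 2
  have hterm : ∀ q ∈ Finset.Icc 1 R, (q / q.totient : ℝ) *
      ∑ χ : DirichletCharacter ℂ q with χ.IsPrimitive,
        ‖∑ n ∈ Finset.range N, c n * χ (n : ZMod q)‖ ^ 2 ≤
      ∑ t ∈ fareyPoints R with addOrderOf t = q, f t := by
    intro q hq
    obtain ⟨hq0, hqR⟩ := Finset.mem_Icc.mp hq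
    have : NeZero q := ⟨by omega⟩
    have hqpos : (0 : ℝ) < q := by exact_mod_cast hq0
    have hφ : (0 : ℝ) < q.totient := by exact_mod_cast Nat.totient_pos.mpr hq0
    refine le_trans ?_ (sum_units_toAddCircle_le hqR fun t ↦ sq_nonneg _)
    refine (mul_le_mul_of_nonneg_left (sum_isPrimitive_norm_sq_le N c) (by positivity)).trans_eq ?_
    rw [← mul_assoc, div_mul_div_cancel₀ hφ.ne', div_self hqpos.ne', one_mul]
  refine (Finset.sum_le_sum hterm).trans ?_
  rw [Finset.sum_fiberwise_of_maps_to fun t ht ↦ mem_fareyPoints.mp ht]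
  rcases R.eq_zero_or_pos with rfl | hR
  · have hempty : fareyPoints 0 = ∅ := rfl
    rw [hempty, Finset.sum_empty]
    positivity
  · simpa only [id, one_div_one_div] using additive_large_sieve (α := id) (by positivity)
      (pairwise_fareyPoints_one_div_sq_le R) N c

end MultiplicativeLargeSieve

section NormVonMangoldt

variable {K : Type*} [Field K] [NumberField K]

theorem LambdaK_nonneg (𝔞 : Ideal (𝓞 K)) : 0 ≤ LambdaK K 𝔞 := by
  rw [LambdaK]
  split_ifs
  exacts [Real.log_natCast_nonneg _, le_rfl]

theorem isPrimePow_absNorm_of_isPrime {𝔭 : Ideal (𝓞 K)} (h𝔭 : 𝔭.IsPrime) (h0 : 𝔭 ≠ ⊥) :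
    IsPrimePow (absNorm 𝔭) := by
  have := h𝔭.isMaximal h0
  obtain ⟨p, k, hk, -, hp, hpk⟩ := Ideal.exists_prime_and_absNorm_eq_pow 𝔭
  exact hpk ▸ hp.isPrimePow.pow hk.ne'

theorem prod_absNorm_dvd_pow_finrank {p : ℕ} {S : Finset (Ideal (𝓞 K))}
    (hS : ∀ 𝔭 ∈ S, 𝔭.IsPrime ∧ 𝔭 ≠ ⊥ ∧ (p : 𝓞 K) ∈ 𝔭) :
    ∏ 𝔭 ∈ S, absNorm 𝔭 ∣ p ^ Module.finrank ℚ K := by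
  rw [← RingOfIntegers.rank, ← Ideal.absNorm_span_natCast, ← map_prod]
  refine map_dvd absNorm (Finset.prod_primes_dvd _ (fun 𝔭 h ↦ ?_) fun 𝔭 h ↦ ?_)
  · exact Ideal.prime_of_isPrime (hS 𝔭 h).2.1 (hS 𝔭 h).1
  · exact Ideal.dvd_span_singleton.mpr (hS 𝔭 h).2.2

namespace IsPrimeIdealPower

variable {𝔞 : Ideal (𝓞 K)}

theorem radical_isPrime (h : IsPrimeIdealPower 𝔞) : 𝔞.radical.IsPrime := by
  obtain ⟨𝔭, m, h𝔭, -, hm, rfl⟩ := h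
  rwa [Ideal.radical_pow _ (by omega), h𝔭.radical]

theorem radical_ne_bot (h : IsPrimeIdealPower 𝔞) : 𝔞.radical ≠ ⊥ := by
  obtain ⟨𝔭, m, h𝔭, h0, hm, rfl⟩ := h
  rwa [Ideal.radical_pow _ (by omega), h𝔭.radical]

theorem exists_eq_radical_pow (h : IsPrimeIdealPower 𝔞) : ∃ m ≠ 0, 𝔞 = 𝔞.radical ^ m := by
  obtain ⟨𝔭, m, h𝔭, -, hm, rfl⟩ := h
  exact ⟨m, by omega, by rw [Ideal.radical_pow _ (by omega), h𝔭.radical]⟩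

theorem isPrimePow_absNorm_radical (h : IsPrimeIdealPower 𝔞) : IsPrimePow (absNorm 𝔞.radical) :=
  isPrimePow_absNorm_of_isPrime h.radical_isPrime h.radical_ne_bot

theorem isPrimePow_absNorm (h : IsPrimeIdealPower 𝔞) : IsPrimePow (absNorm 𝔞) := by
  obtain ⟨m, hm, h𝔞⟩ := h.exists_eq_radical_pow
  rw [h𝔞, map_pow]
  exact h.isPrimePow_absNorm_radical.pow hm

theorem minFac_absNorm_mem_radical (h : IsPrimeIdealPower 𝔞) :
    ((absNorm 𝔞).minFac : 𝓞 K) ∈ 𝔞.radical := by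
  refine h.radical_isPrime.mem_of_pow_mem ((absNorm 𝔞).factorization (absNorm 𝔞).minFac) ?_
  rw [← Nat.cast_pow, h.isPrimePow_absNorm.minFac_pow_factorization_eq]
  exact Ideal.le_radical (Ideal.absNorm_mem 𝔞)

theorem injOn_radical (n : ℕ) :
    {𝔞 : Ideal (𝓞 K) | IsPrimeIdealPower 𝔞 ∧ absNorm 𝔞 = n}.InjOn Ideal.radical := by
  rintro 𝔞 ⟨h𝔞, hn⟩ 𝔟 ⟨h𝔟, hn'⟩ hrad
  obtain ⟨m, -, hm⟩ := h𝔞.exists_eq_radical_pow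
  obtain ⟨m', -, hm'⟩ := h𝔟.exists_eq_radical_pow
  have hpow : absNorm 𝔞.radical ^ m = absNorm 𝔞.radical ^ m' := by
    rw [← map_pow, ← hm, hn, ← hn', hrad, ← map_pow, ← hm']
  rw [hm, hm', ← hrad, Nat.pow_right_injective h𝔞.isPrimePow_absNorm_radical.one_lt hpow]

end IsPrimeIdealPower

theorem sum_log_absNorm_radical_le {n : ℕ} {A : Finset (Ideal (𝓞 K))}
    (hA : ∀ 𝔞 ∈ A, IsPrimeIdealPower 𝔞 ∧ absNorm 𝔞 = n) :
    ∑ 𝔞 ∈ A, Real.log (absNorm 𝔞.radical) ≤ Module.finrank ℚ K * Real.log n.minFac := by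
  have hdvd : ∏ 𝔞 ∈ A, absNorm 𝔞.radical ∣ n.minFac ^ Module.finrank ℚ K := by
    rw [← Finset.prod_image ((IsPrimeIdealPower.injOn_radical n).mono hA)]
    refine prod_absNorm_dvd_pow_finrank fun 𝔭 h ↦ ?_
    obtain ⟨𝔞, h𝔞, rfl⟩ := Finset.mem_image.mp h
    obtain ⟨hpow, rfl⟩ := hA 𝔞 h𝔞
    exact ⟨hpow.radical_isPrime, hpow.radical_ne_bot, hpow.minFac_absNorm_mem_radical⟩
  have hne : ∀ 𝔞 ∈ A, absNorm 𝔞.radical ≠ 0 := fun 𝔞 h ↦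
    (hA 𝔞 h).1.isPrimePow_absNorm_radical.ne_zero
  have hle := Nat.le_of_dvd (pow_pos n.minFac_pos _) hdvd
  calc ∑ 𝔞 ∈ A, Real.log (absNorm 𝔞.radical)
      = Real.log ((∏ 𝔞 ∈ A, absNorm 𝔞.radical : ℕ) : ℝ) := by
        rw [Nat.cast_prod, Real.log_prod fun 𝔞 h ↦ Nat.cast_ne_zero.mpr (hne 𝔞 h)]
    _ ≤ Real.log ((n.minFac : ℝ) ^ Module.finrank ℚ K) := by
        refine Real.log_le_log ?_ (by exact_mod_cast hle)
        exact_mod_cast Nat.pos_of_ne_zero (Finset.prod_ne_zero_iff.mpr hne)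
    _ = Module.finrank ℚ K * Real.log n.minFac := Real.log_pow _ _

variable (K)

/-- `∑_{N𝔞 = n} Λ_K(𝔞)`, the coefficient of `χ(n)` in `ψ_K(x, χ∘N)`. -/
noncomputable def normVonMangoldt (n : ℕ) : ℝ :=
  ∑ 𝔞 ∈ (finite_setOfPred_absNorm_eq (S := 𝓞 K) n).toFinset, LambdaK K 𝔞

theorem normVonMangoldt_nonneg (n : ℕ) : 0 ≤ normVonMangoldt K n :=
  Finset.sum_nonneg fun 𝔞 _ ↦ LambdaK_nonneg 𝔞

theorem normVonMangoldt_le (n : ℕ) :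
    normVonMangoldt K n ≤ Module.finrank ℚ K * ArithmeticFunction.vonMangoldt n := by
  rw [ArithmeticFunction.vonMangoldt_apply]
  split_ifs with hn
  · simp_rw [normVonMangoldt, LambdaK, ← Finset.sum_filter]
    exact sum_log_absNorm_radical_le fun 𝔞 h ↦ by simpa [and_comm] using h
  · rw [mul_zero]
    refine (Finset.sum_eq_zero fun 𝔞 h ↦ if_neg fun hpow ↦ hn ?_).le
    rw [← (by simpa using h : absNorm 𝔞 = n)]
    exact hpow.isPrimePow_absNorm

theorem sum_normVonMangoldt_sq_le {x : ℝ} (hx : 1 ≤ x) :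
    ∑ n ∈ Finset.range (⌊x⌋₊ + 1), normVonMangoldt K n ^ 2 ≤
      (Module.finrank ℚ K : ℝ) ^ 2 * (Real.log 4 + 4) * (x * Real.log x) := by
  have hΛ : ∀ n ∈ Finset.range (⌊x⌋₊ + 1), ArithmeticFunction.vonMangoldt n ≤ Real.log x := by
    intro n hn
    rcases n.eq_zero_or_pos with rfl | hpos
    · simpa using Real.log_nonneg hx
    · refine ArithmeticFunction.vonMangoldt_le_log.trans (Real.log_le_log (mod_cast hpos) ?_)
      exact (Nat.le_floor_iff (by linarith)).mp (Nat.lt_succ_iff.mp (Finset.mem_range.mp hn))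
  set d : ℝ := (Module.finrank ℚ K : ℝ)
  calc ∑ n ∈ Finset.range (⌊x⌋₊ + 1), normVonMangoldt K n ^ 2
      ≤ ∑ n ∈ Finset.range (⌊x⌋₊ + 1),
          d ^ 2 * Real.log x * ArithmeticFunction.vonMangoldt n := by
        refine Finset.sum_le_sum fun n hn ↦ ?_
        have := ArithmeticFunction.vonMangoldt_nonneg (n := n)
        calc normVonMangoldt K n ^ 2 ≤ (d * ArithmeticFunction.vonMangoldt n) ^ 2 :=
              pow_le_pow_left₀ (normVonMangoldt_nonneg K n) (normVonMangoldt_le K n) 2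
          _ = d ^ 2 * ArithmeticFunction.vonMangoldt n * ArithmeticFunction.vonMangoldt n := by
              ring
          _ ≤ d ^ 2 * Real.log x * ArithmeticFunction.vonMangoldt n := by
              gcongr
              exact hΛ n hn
    _ = d ^ 2 * Real.log x * Chebyshev.psi x := by
        rw [← Finset.mul_sum, Chebyshev.psi_eq_sum_Icc, Finset.range_eq_Ico]
        rfl
    _ ≤ d ^ 2 * Real.log x * ((Real.log 4 + 4) * x) := by
        have := Real.log_nonneg hx
        gcongr
        exact Chebyshev.psi_le_const_mul_self (by linarith)
    _ = d ^ 2 * (Real.log 4 + 4) * (x * Real.log x) := by ring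

theorem psiKChi_eq_sum {x : ℝ} (hx : 0 ≤ x) {q : ℕ} (χ : DirichletCharacter ℂ q) :
    psiKChi K x χ =
      ∑ n ∈ Finset.range (⌊x⌋₊ + 1), (normVonMangoldt K n : ℂ) * χ (n : ZMod q) := by
  set A := (finite_setOfPred_absNorm_le (S := 𝓞 K) ⌊x⌋₊).toFinset with hA
  have hmem : ∀ 𝔞, 𝔞 ∈ A ↔ absNorm 𝔞 ≤ ⌊x⌋₊ := by simp [hA]
  have hfib : ∀ n ≤ ⌊x⌋₊, A.filter (fun 𝔞 ↦ absNorm 𝔞 = n) =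
      (finite_setOfPred_absNorm_eq (S := 𝓞 K) n).toFinset := fun n hn ↦ by
    ext 𝔞
    simp only [Finset.mem_filter, hmem, Set.Finite.mem_toFinset, Set.mem_ofPred_eq]
    exact ⟨fun h ↦ h.2, fun h ↦ ⟨h ▸ hn, h⟩⟩
  calc psiKChi K x χ = ∑ 𝔞 ∈ A, χ (absNorm 𝔞 : ZMod q) * (LambdaK K 𝔞 : ℂ) := by
        rw [psiKChi, tsum_eq_sum (s := A) fun 𝔞 h ↦ if_neg fun hle ↦
          h ((hmem 𝔞).mpr (Nat.le_floor hle))]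
        exact Finset.sum_congr rfl fun 𝔞 h ↦ if_pos ((Nat.le_floor_iff hx).mp ((hmem 𝔞).mp h))
    _ = ∑ n ∈ Finset.range (⌊x⌋₊ + 1), ∑ 𝔞 ∈ A with absNorm 𝔞 = n,
          χ (absNorm 𝔞 : ZMod q) * (LambdaK K 𝔞 : ℂ) :=
        (Finset.sum_fiberwise_of_maps_to
          (fun 𝔞 h ↦ Finset.mem_range_succ_iff.mpr ((hmem 𝔞).mp h)) _).symm
    _ = ∑ n ∈ Finset.range (⌊x⌋₊ + 1), (normVonMangoldt K n : ℂ) * χ (n : ZMod q) := by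
        refine Finset.sum_congr rfl fun n hn ↦ ?_
        rw [hfib n (Finset.mem_range_succ_iff.mp hn), normVonMangoldt, Complex.ofReal_sum,
          Finset.sum_mul]
        refine Finset.sum_congr rfl fun 𝔞 h ↦ ?_
        rw [(by simpa using h : absNorm 𝔞 = n), mul_comm]

end NormVonMangoldt

section LargeSieveForPsi

variable (K : Type*) [Field K] [NumberField K]

theorem large_sieve_psiKChi {x : ℝ} (hx : 2 ≤ x) (R : ℕ) :
    ∑ q ∈ Finset.Icc 1 R, (q / q.totient : ℝ) *
        ∑ χ : DirichletCharacter ℂ q with χ.IsPrimitive, ‖psiKChi K x χ‖ ^ 2 ≤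
      36 * ((Module.finrank ℚ K : ℝ) ^ 2 * (Real.log 4 + 4)) *
        ((x + (R : ℝ) ^ 2) * x * Real.log x) := by
  have hx0 : 0 ≤ x := by linarith
  have hN : ((⌊x⌋₊ + 1 : ℕ) : ℝ) + (R : ℝ) ^ 2 + 1 ≤ 2 * (x + (R : ℝ) ^ 2) := by
    have := Nat.floor_le hx0
    push_cast
    nlinarith
  have hcoeff := sum_normVonMangoldt_sq_le K (x := x) (by linarith)
  have hsieve := multiplicative_large_sieve R (⌊x⌋₊ + 1) fun n ↦ (normVonMangoldt K n : ℂ)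
  simp_rw [← psiKChi_eq_sum K hx0, Complex.norm_real, Real.norm_eq_abs, sq_abs] at hsieve
  refine (hsieve.trans (mul_le_mul (mul_le_mul_of_nonneg_left hN (by norm_num)) hcoeff
    (by positivity) (by positivity))).trans_eq ?_
  ring

theorem norm_psiKChi'_sq_le (x : ℝ) {q : ℕ} [NeZero q] {χ : DirichletCharacter ℂ q}
    (hχ : χ.IsPrimitive) :
    ‖psiKChi' K x χ‖ ^ 2 ≤
      2 * ‖psiKChi K x χ‖ ^ 2 + if q ∈ exceptionalModuli K then 2 * x ^ 2 else 0 := by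
  by_cases htriv : ∀ a ∈ Gq K q, χ (a : ZMod q) = 1
  · rw [psiKChi', if_pos htriv, if_pos (show q ∈ exceptionalModuli K from
      ⟨NeZero.ne q, χ, hχ, htriv⟩), ← mul_add]
    calc ‖psiKChi K x χ - x‖ ^ 2 ≤ (‖psiKChi K x χ‖ + |x|) ^ 2 := by
          gcongr
          simpa using norm_sub_le (psiKChi K x χ) (x : ℂ)
      _ ≤ 2 * (‖psiKChi K x χ‖ ^ 2 + x ^ 2) := by simpa using add_sq_le (b := |x|)
  · rw [psiKChi', if_neg htriv]
    have : (0 : ℝ) ≤ if q ∈ exceptionalModuli K then 2 * x ^ 2 else 0 := by positivity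
    linarith [sq_nonneg ‖psiKChi K x χ‖]

theorem sum_norm_psiKChi'_sq_le (x : ℝ) (q : ℕ) [NeZero q] :
    ∑ χ : DirichletCharacter ℂ q with χ.IsPrimitive, ‖psiKChi' K x χ‖ ^ 2 ≤
      2 * ∑ χ : DirichletCharacter ℂ q with χ.IsPrimitive, ‖psiKChi K x χ‖ ^ 2 +
        q.totient * if q ∈ exceptionalModuli K then 2 * x ^ 2 else 0 := by
  have hcard : (Finset.univ.filter fun χ : DirichletCharacter ℂ q ↦ χ.IsPrimitive).card ≤
      q.totient := by
    rw [← DirichletCharacter.card_eq_totient_of_hasEnoughRootsOfUnity ℂ q,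
      Nat.card_eq_fintype_card]
    exact Finset.card_le_univ _
  refine (Finset.sum_le_sum fun χ hχ ↦
    norm_psiKChi'_sq_le K x (Finset.mem_filter.mp hχ).2).trans ?_
  rw [Finset.sum_add_distrib, ← Finset.mul_sum, Finset.sum_const, nsmul_eq_mul]
  gcongr

theorem sum_sum_norm_psiKChi'_sq_le (x : ℝ) (R : ℕ) :
    ∑ q ∈ Finset.Icc 1 R, (q / q.totient : ℝ) *
        ∑ χ : DirichletCharacter ℂ q with χ.IsPrimitive, ‖psiKChi' K x χ‖ ^ 2 ≤
      2 * ∑ q ∈ Finset.Icc 1 R, (q / q.totient : ℝ) *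
          ∑ χ : DirichletCharacter ℂ q with χ.IsPrimitive, ‖psiKChi K x χ‖ ^ 2 +
        2 * x ^ 2 * ∑ q ∈ (finite_exceptionalModuli K).toFinset, (q : ℝ) := by
  have hterm : ∀ q ∈ Finset.Icc 1 R, (q / q.totient : ℝ) *
      ∑ χ : DirichletCharacter ℂ q with χ.IsPrimitive, ‖psiKChi' K x χ‖ ^ 2 ≤
      2 * ((q / q.totient : ℝ) *
        ∑ χ : DirichletCharacter ℂ q with χ.IsPrimitive, ‖psiKChi K x χ‖ ^ 2) +
      q * if q ∈ exceptionalModuli K then 2 * x ^ 2 else 0 := by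
    intro q hq
    have hq0 := (Finset.mem_Icc.mp hq).1
    have : NeZero q := ⟨by omega⟩
    have hφ : (q.totient : ℝ) ≠ 0 := by exact_mod_cast (Nat.totient_pos.mpr hq0).ne'
    refine (mul_le_mul_of_nonneg_left (sum_norm_psiKChi'_sq_le K x q) (by positivity)).trans_eq ?_
    field_simp
  refine (Finset.sum_le_sum hterm).trans ?_
  rw [Finset.sum_add_distrib, ← Finset.mul_sum]
  gcongr
  simp_rw [mul_ite, mul_zero, ← Finset.sum_filter, ← Finset.sum_mul]
  rw [mul_comm]
  gcongr
  intro q hq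
  simpa using (Finset.mem_filter.mp hq).2

theorem exists_large_sieve_psiKChi' :
    ∃ C : ℝ, 0 < C ∧ ∀ x : ℝ, 2 ≤ x → ∀ R : ℕ,
      ∑ q ∈ Finset.Icc 1 R, (q / q.totient : ℝ) *
          ∑ χ : DirichletCharacter ℂ q with χ.IsPrimitive, ‖psiKChi' K x χ‖ ^ 2 ≤
        C * ((x + (R : ℝ) ^ 2) * x * Real.log x) := by
  set c := (Module.finrank ℚ K : ℝ) ^ 2 * (Real.log 4 + 4)
  set S := ∑ q ∈ (finite_exceptionalModuli K).toFinset, (q : ℝ)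
  have : 0 ≤ S := Finset.sum_nonneg fun q _ ↦ q.cast_nonneg
  refine ⟨72 * c + 4 * S + 1, by positivity, fun x hx R ↦ ?_⟩
  have hlog : 1 / 2 ≤ Real.log x := by
    linarith [Real.log_two_gt_d9, Real.log_le_log (by norm_num) hx]
  set M := (x + (R : ℝ) ^ 2) * x * Real.log x
  have hM : 0 ≤ M := by positivity
  have hx2 : x ^ 2 ≤ 2 * M := by
    calc x ^ 2 = 2 * ((x + 0) * x * (1 / 2)) := by ring
      _ ≤ 2 * M := by
          unfold M
          gcongr
          exact sq_nonneg _
  refine (sum_sum_norm_psiKChi'_sq_le K x R).trans ?_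
  calc _ ≤ 2 * (36 * c * M) + 2 * (2 * M) * S := by grw [large_sieve_psiKChi K hx R, hx2]
    _ ≤ (72 * c + 4 * S + 1) * M := by linarith

end LargeSieveForPsi

theorem sum_Ioc_one_div_totient_mul_log_le {U y : ℝ} (hU : 0 < U) (hUy : U ≤ y) (R : ℕ)
    {g : ℕ → ℝ} (hg : 0 ≤ g) :
    ∑ q ∈ Finset.Ioc ⌊U⌋₊ R, (1 / q.totient : ℝ) * Real.log (y / q) * g q ≤
      Real.log (y / U) / U * ∑ q ∈ Finset.Icc 1 R, (q / q.totient : ℝ) * g q := by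
  have hy : 0 < y := hU.trans_le hUy
  have hlog : 0 ≤ Real.log (y / U) := Real.log_nonneg ((one_le_div hU).mpr hUy)
  have hterm : ∀ q ∈ Finset.Ioc ⌊U⌋₊ R, (1 / q.totient : ℝ) * Real.log (y / q) * g q ≤
      Real.log (y / U) / U * ((q / q.totient : ℝ) * g q) := by
    intro q hq
    have hUq : U < q := Nat.lt_of_floor_lt (Finset.mem_Ioc.mp hq).1
    have hlogq : Real.log (y / q) ≤ Real.log (y / U) * (q / U) := by
      calc Real.log (y / q) ≤ Real.log (y / U) :=
            Real.log_le_log (div_pos hy (hU.trans hUq)) (by gcongr)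
        _ ≤ Real.log (y / U) * (q / U) :=
            le_mul_of_one_le_right hlog ((one_le_div hU).mpr hUq.le)
    calc (1 / q.totient : ℝ) * Real.log (y / q) * g q
        ≤ (1 / q.totient : ℝ) * (Real.log (y / U) * (q / U)) * g q := by
          gcongr
          exact hg q
      _ = Real.log (y / U) / U * ((q / q.totient : ℝ) * g q) := by ring
  have hsub : Finset.Ioc ⌊U⌋₊ R ⊆ Finset.Icc 1 R := fun q hq ↦ by
    simp only [Finset.mem_Ioc, Finset.mem_Icc] at hq ⊢
    omega
  rw [Finset.mul_sum]
  refine (Finset.sum_le_sum hterm).trans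
    (Finset.sum_le_sum_of_subset_of_nonneg hsub fun q _ _ ↦ ?_)
  have : 0 ≤ g q := hg q
  positivity

theorem dyadic_block_bound_general (K : Type*) [Field K] [NumberField K] :
    ∃ C : ℝ, 0 < C ∧ ∀ x U Q : ℝ, 2 ≤ x → 1 ≤ 2 * U → 2 * U ≤ Q →
      ∑ q ∈ Finset.Ioc ⌊U⌋₊ ⌊2 * U⌋₊, (1 / q.totient : ℝ) * Real.log (2 * Q / q) *
          ∑ᶠ χ ∈ {χ : DirichletCharacter ℂ q | χ.IsPrimitive}, ‖psiKChi' K x χ‖ ^ 2 ≤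
        C * ((x / U + U) * x * Real.log x * Real.log (2 * Q / U)) := by
  obtain ⟨C, hC, hsieve⟩ := exists_large_sieve_psiKChi' K
  refine ⟨4 * C, by positivity, fun x U Q hx hU hQ ↦ ?_⟩
  have hU0 : 0 < U := by linarith
  have hlogx : 0 ≤ Real.log x := Real.log_nonneg (by linarith)
  have hlogQ : 0 ≤ Real.log (2 * Q / U) := Real.log_nonneg ((one_le_div hU0).mpr (by linarith))
  have hfloor : (⌊2 * U⌋₊ : ℝ) ≤ 2 * U := Nat.floor_le (by linarith)
  have hfinsum (q : ℕ) :
      ∑ᶠ χ ∈ {χ : DirichletCharacter ℂ q | χ.IsPrimitive}, ‖psiKChi' K x χ‖ ^ 2 =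
        ∑ χ : DirichletCharacter ℂ q with χ.IsPrimitive, ‖psiKChi' K x χ‖ ^ 2 :=
    finsum_mem_eq_sum_of_inter_support_eq _ (by ext; simp)
  simp_rw [hfinsum]
  refine (sum_Ioc_one_div_totient_mul_log_le hU0 (by linarith) ⌊2 * U⌋₊
    fun q ↦ Finset.sum_nonneg fun χ _ ↦ sq_nonneg ‖psiKChi' K x χ‖).trans ?_
  calc _ ≤ Real.log (2 * Q / U) / U * (C * ((x + (2 * U) ^ 2) * x * Real.log x)) := by
        grw [hsieve x hx ⌊2 * U⌋₊, hfloor]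
    _ = C * ((x / U + 4 * U) * x * Real.log x * Real.log (2 * Q / U)) := by
        field_simp
        ring
    _ ≤ C * ((4 * (x / U) + 4 * U) * x * Real.log x * Real.log (2 * Q / U)) := by
        gcongr
        exact le_mul_of_one_le_left (by positivity) (by norm_num)
    _ = 4 * C * ((x / U + U) * x * Real.log x * Real.log (2 * Q / U)) := by ring

/-- **Dyadic block estimate.** For `x ≥ 2` and `1 ≤ 2U ≤ Q`,
`∑_{U < q ≤ 2U} (1/φ(q)) log(2Q/q) ∑_{χ primitive mod q} |ψ'_K(x, χ∘N)|²
  ≪ (x/U + U) x log x log(2Q/U)`, the implied constant depending only on `K`. -/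
theorem dyadic_block_bound (K : Type*) [Field K] [NumberField K] [IsGalois ℚ K] :
    ∃ C : ℝ, 0 < C ∧ ∀ x U Q : ℝ, 2 ≤ x → 1 ≤ 2 * U → 2 * U ≤ Q →
      ∑ q ∈ Finset.Ioc ⌊U⌋₊ ⌊2 * U⌋₊, (1 / q.totient : ℝ) * Real.log (2 * Q / q) *
          ∑ᶠ χ ∈ {χ : DirichletCharacter ℂ q | χ.IsPrimitive}, ‖psiKChi' K x χ‖ ^ 2 ≤
        C * ((x / U + U) * x * Real.log x * Real.log (2 * Q / U)) :=
  dyadic_block_bound_general K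
end
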